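/- Let R be a ring with the discrete topology, let (M_j)_{j∈J} be a family of finitely generated projective left R-modules, each given the discrete topology, and give ∏_{j∈J} M_j the product topology. Let Z be a finitely generated projective left R-module with the discrete topology. Then the canonical homomorphism ⊕_{j∈J} Hom_R(M_j, Z) → Hom_{R}^{cts}(∏_{j∈J} M_j, Z), sending a finitely supported family (f_j)_{j∈J} to the map (x_j)_j ↦ ∑_{j} f_j(x_j), is a bijection. In particular, every continuous R-linear map ∏_{j∈J} M_j → Z factors through the projection onto finitely many factors. (The key claim in the proof of Proposition 4.7.) -/

import Mathlib

/-!
A neighbourhood of `0` in `∏ j, M j` contains the submodule of all families vanishing on some finite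
set `s` of indices. A continuous linear map `g` therefore sends such a submodule into a prescribed
neighbourhood of `0` in `Z`; if that neighbourhood contains no nonzero submodule, as `{0}` does when
`Z` is discrete, then `g` kills all families vanishing on `s`. So `g x` depends only on the
coordinates in `s`, and `g` is the image of the finitely supported family of its restrictions to the
factors in `s`.
-/

universe u

/-- Precomposition with the `j`-th projection, as an additive map
`Hom_R(M j, Z) →+ Hom_R(∏ j, M j, Z)`. -/
def compProjHom (R : Type u) [Ring R] {J : Type u} (M : J → Type u)
    [∀ j, AddCommGroup (M j)] [∀ j, Module R (M j)]
    (Z : Type u) [AddCommGroup Z] [Module R Z] (j : J) :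
    (M j →ₗ[R] Z) →+ ((∀ j, M j) →ₗ[R] Z) where
  toFun g := g.comp (LinearMap.proj j)
  map_zero' := LinearMap.ext fun _ => rfl
  map_add' _ _ := LinearMap.ext fun _ => rfl

/-- The canonical homomorphism `⊕_j Hom_R(M j, Z) → Hom_R(∏_j M j, Z)`, sending a
finitely supported family `(f_j)_j` to the map `(x_j)_j ↦ ∑_j f_j (x_j)`. -/
noncomputable def canonicalHom (R : Type u) [Ring R] {J : Type u} [DecidableEq J]
    (M : J → Type u) [∀ j, AddCommGroup (M j)] [∀ j, Module R (M j)]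
    (Z : Type u) [AddCommGroup Z] [Module R Z] :
    (Π₀ j, (M j →ₗ[R] Z)) → ((∀ j, M j) →ₗ[R] Z) :=
  fun f => DFinsupp.sumAddHom (compProjHom R M Z) f

open Topology

/-- The linear analogue of a topological group without small subgroups: some neighbourhood of `0`
contains no nonzero submodule. It isolates what the finiteness argument needs of the target
module. -/
def NoSmallSubmodules (R Z : Type*) [Ring R] [AddCommGroup Z] [Module R Z]
    [TopologicalSpace Z] : Prop :=
  ∃ U ∈ 𝓝 (0 : Z), ∀ N : Submodule R Z, (N : Set Z) ⊆ U → N = ⊥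

theorem NoSmallSubmodules.of_discreteTopology (R Z : Type*) [Ring R] [AddCommGroup Z] [Module R Z]
    [TopologicalSpace Z] [DiscreteTopology Z] : NoSmallSubmodules R Z :=
  ⟨{0}, by simp, fun N hN => (Submodule.eq_bot_iff N).2 hN⟩

section LinearMapsOnProducts

variable {R J Z : Type*} {M : J → Type*} [Ring R] [∀ j, AddCommGroup (M j)] [∀ j, Module R (M j)]
  [AddCommGroup Z] [Module R Z]

theorem exists_finset_submodulePi_bot_subset_of_mem_nhds_zero [∀ j, TopologicalSpace (M j)]
    {V : Set (∀ j, M j)} (hV : V ∈ 𝓝 0) :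
    ∃ s : Finset J,
      (Submodule.pi (s : Set J) (fun j => (⊥ : Submodule R (M j))) : Set (∀ j, M j)) ⊆ V := by
  rw [nhds_pi, Filter.mem_pi'] at hV
  obtain ⟨s, t, ht, htV⟩ := hV
  refine ⟨s, fun x hx => htV fun j hj => ?_⟩
  have hxj : x j = 0 := hx j hj
  exact hxj ▸ mem_of_mem_nhds (ht j)

theorem NoSmallSubmodules.exists_finset_submodulePi_bot_le_ker [∀ j, TopologicalSpace (M j)]
    [TopologicalSpace Z] (hZ : NoSmallSubmodules R Z) {g : (∀ j, M j) →ₗ[R] Z}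
    (hg : ContinuousAt g 0) :
    ∃ s : Finset J, Submodule.pi (s : Set J) (fun _ => ⊥) ≤ LinearMap.ker g := by
  obtain ⟨U, hU, hU_bot⟩ := hZ
  have hgU : g ⁻¹' U ∈ 𝓝 0 := hg (by rwa [map_zero])
  obtain ⟨s, hs⟩ := exists_finset_submodulePi_bot_subset_of_mem_nhds_zero (R := R) hgU
  have map_eq_bot : (Submodule.pi (s : Set J) fun _ => ⊥).map g = ⊥ :=
    hU_bot _ (Set.image_subset_iff.2 hs)
  exact ⟨s, LinearMap.le_ker_iff_map.2 map_eq_bot⟩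

theorem map_eq_sum_single_of_submodulePi_bot_le_ker [DecidableEq J] {g : (∀ j, M j) →ₗ[R] Z}
    {s : Finset J} (hs : Submodule.pi (s : Set J) (fun _ => ⊥) ≤ LinearMap.ker g)
    (x : ∀ j, M j) : g x = ∑ j ∈ s, g (Pi.single j (x j)) := by
  have sub_mem : x - ∑ j ∈ s, Pi.single j (x j) ∈
      Submodule.pi (s : Set J) (fun j => (⊥ : Submodule R (M j))) := fun i hi => by
    simp [Finset.sum_apply, Finset.sum_pi_single, Finset.mem_coe.1 hi]
  rw [← map_sum]
  exact LinearMap.sub_mem_ker_iff.1 (hs sub_mem)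

theorem NoSmallSubmodules.exists_factor_finset [∀ j, TopologicalSpace (M j)]
    [TopologicalSpace Z] [ContinuousAdd Z] (hZ : NoSmallSubmodules R Z)
    {g : (∀ j, M j) →ₗ[R] Z} (hg : Continuous g) :
    ∃ (s : Finset J) (h : (∀ j : s, M j) →ₗ[R] Z), Continuous h ∧
      ∀ x : ∀ j, M j, g x = h (fun j => x j.1) := by
  classical
  obtain ⟨s, hs⟩ := hZ.exists_finset_submodulePi_bot_le_ker hg.continuousAt
  let h : (∀ j : s, M j) →ₗ[R] Z := ∑ j : s, g ∘ₗ LinearMap.single R M j ∘ₗ LinearMap.proj j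
  have h_apply (y : ∀ j : s, M j) : h y = ∑ j : s, g (Pi.single j.1 (y j)) := by
    simp [h, LinearMap.sum_apply]
  refine ⟨s, h, ?_, fun x => ?_⟩
  · rw [funext h_apply]
    fun_prop
  · rw [h_apply, map_eq_sum_single_of_submodulePi_bot_le_ker hs, ← Finset.sum_coe_sort]

end LinearMapsOnProducts

section CanonicalHom

variable {R J Z : Type u} {M : J → Type u} [Ring R] [DecidableEq J]
  [∀ j, AddCommGroup (M j)] [∀ j, Module R (M j)] [AddCommGroup Z] [Module R Z]

theorem canonicalHom_apply_eq_sum {f : Π₀ j, (M j →ₗ[R] Z)} {s : Finset J}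
    (hs : ∀ j ∉ s, f j = 0) (x : ∀ j, M j) :
    canonicalHom R M Z f x = ∑ j ∈ s, f j (x j) := by
  classical
  have support_subset : f.support ⊆ s := fun j hj => by
    contrapose! hj
    simpa using hs j hj
  calc canonicalHom R M Z f x = ∑ j ∈ f.support, f j (x j) := by
        simp only [canonicalHom, DFinsupp.sumAddHom_apply, DFinsupp.sum, LinearMap.sum_apply]
        rfl
    _ = ∑ j ∈ s, f j (x j) :=
        Finset.sum_subset support_subset fun j _ hj => by
          rw [DFinsupp.notMem_support_iff.1 hj, LinearMap.zero_apply]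

theorem canonicalHom_apply_single (f : Π₀ j, (M j →ₗ[R] Z)) (j : J) (m : M j) :
    canonicalHom R M Z f (Pi.single j m) = f j m := by
  classical
  have hs : ∀ i ∉ insert j f.support, f i = 0 := by simp +contextual
  rw [canonicalHom_apply_eq_sum hs, Finset.sum_eq_single_of_mem j (Finset.mem_insert_self _ _)
    fun i _ hij => by rw [Pi.single_eq_of_ne hij, map_zero], Pi.single_eq_same]

theorem canonicalHom_injective : Function.Injective (canonicalHom R M Z) := fun f f' h => by
  ext j m
  rw [← canonicalHom_apply_single, h, canonicalHom_apply_single]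

theorem canonicalHom_mk_comp_single {g : (∀ j, M j) →ₗ[R] Z} {s : Finset J}
    (hs : Submodule.pi (s : Set J) (fun _ => ⊥) ≤ LinearMap.ker g) :
    canonicalHom R M Z (DFinsupp.mk s fun j => g ∘ₗ LinearMap.single R M j) = g := by
  ext1 x
  rw [map_eq_sum_single_of_submodulePi_bot_le_ker hs,
    canonicalHom_apply_eq_sum fun j hj => DFinsupp.mk_of_notMem hj]
  refine Finset.sum_congr rfl fun j hj => ?_
  rw [DFinsupp.mk_of_mem hj, LinearMap.comp_apply, LinearMap.single_apply]

variable [∀ j, TopologicalSpace (M j)] [TopologicalSpace Z]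

theorem continuous_canonicalHom_iff [ContinuousAdd Z] {f : Π₀ j, (M j →ₗ[R] Z)} :
    Continuous (canonicalHom R M Z f) ↔ ∀ j, Continuous (f j) := by
  classical
  constructor
  · intro hf j
    simpa only [Function.comp_def, canonicalHom_apply_single] using hf.comp (continuous_single j)
  · intro hf
    have apply_eq_sum : ⇑(canonicalHom R M Z f) = fun x => ∑ j ∈ f.support, f j (x j) :=
      funext <| canonicalHom_apply_eq_sum fun _ => DFinsupp.notMem_support_iff.1
    rw [apply_eq_sum]
    fun_prop

theorem NoSmallSubmodules.exists_canonicalHom_eq (hZ : NoSmallSubmodules R Z)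
    {g : (∀ j, M j) →ₗ[R] Z} (hg : ContinuousAt g 0) : ∃ f, canonicalHom R M Z f = g :=
  let ⟨_, hs⟩ := hZ.exists_finset_submodulePi_bot_le_ker hg
  ⟨_, canonicalHom_mk_comp_single hs⟩

end CanonicalHom

theorem canonicalHom_bijOn_continuous_linear_maps_general
    (R : Type u) [Ring R] (J : Type u) [DecidableEq J] (M : J → Type u)
    [∀ j, AddCommGroup (M j)] [∀ j, Module R (M j)] [∀ j, TopologicalSpace (M j)]
    (Z : Type u) [AddCommGroup Z] [Module R Z] [TopologicalSpace Z] [ContinuousAdd Z]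
    (hZ : NoSmallSubmodules R Z) :
    Set.BijOn (canonicalHom R M Z) {f | ∀ j, Continuous (f j)}
      {g : (∀ j, M j) →ₗ[R] Z | Continuous g} ∧
    ∀ g : (∀ j, M j) →ₗ[R] Z, Continuous g →
      ∃ (s : Finset J) (h : (∀ j : s, M j) →ₗ[R] Z), Continuous h ∧
        ∀ x : ∀ j, M j, g x = h (fun j => x j.1) := by
  refine ⟨⟨fun _ => continuous_canonicalHom_iff.2, canonicalHom_injective.injOn, ?_⟩,
    fun _ => hZ.exists_factor_finset⟩
  intro g hg
  obtain ⟨f, rfl⟩ := hZ.exists_canonicalHom_eq hg.continuousAt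
  exact ⟨f, continuous_canonicalHom_iff.1 hg, rfl⟩

/-- **Key claim in the proof of Proposition 4.7**: for a discrete ring `R`, a family of
discrete finitely generated projective modules `M j`, and a discrete finitely generated
projective module `Z`, the canonical homomorphism `⊕_j Hom_R(M j, Z) → Hom_R^cts(∏_j M j, Z)`
is a bijection onto the continuous `R`-linear maps `∏_j M j → Z` (for the product
topology); in particular every continuous `R`-linear map `∏_j M j → Z` factors through
the projection onto finitely many factors. -/
theorem canonicalHom_bijOn_continuous_linear_maps
    (R : Type u) [Ring R] [TopologicalSpace R] [DiscreteTopology R]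
    (J : Type u) [DecidableEq J] (M : J → Type u)
    [∀ j, AddCommGroup (M j)] [∀ j, Module R (M j)]
    [∀ j, TopologicalSpace (M j)] [∀ j, DiscreteTopology (M j)]
    (hMfin : ∀ j, Module.Finite R (M j)) (hMproj : ∀ j, Module.Projective R (M j))
    (Z : Type u) [AddCommGroup Z] [Module R Z] [TopologicalSpace Z] [DiscreteTopology Z]
    (hZfin : Module.Finite R Z) (hZproj : Module.Projective R Z) :
    Set.BijOn (canonicalHom R M Z) Set.univ
      {g : (∀ j, M j) →ₗ[R] Z | Continuous g} ∧
    ∀ g : (∀ j, M j) →ₗ[R] Z, Continuous g →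
      ∃ (s : Finset J) (h : (∀ j : s, M j) →ₗ[R] Z),
        ∀ x : ∀ j, M j, g x = h (fun j => x j.1) := by
  simpa [continuous_of_discreteTopology] using
    canonicalHom_bijOn_continuous_linear_maps_general R J M Z (.of_discreteTopology R Z)
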